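/- Let α ∈ (ℤ_{≥0})ⁿ and r₁ > 0, and set q_α := Σ_{j=1}^n (α_j+1)/p_j − 1. Then the integral ∫_{{ψ < log r₁}} |w^α|² e^{−ψ} dλ_n is finite if and only if q_α > 0, and when q_α > 0 it equals πⁿ (q_α+1) r₁^{q_α} / (q_α · Π_{j=1}^n (α_j+1)). -/

import Mathlib

open MeasureTheory Filter

/-- `psi p w = max_j 2 p_j log |w_j|`. -/
noncomputable def psi {n : ℕ} (p : Fin n → ℝ) (w : Fin n → ℂ) : ℝ :=
  ⨆ j, 2 * p j * Real.log ‖w j‖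

/-!
For real exponents `a_j > -1`, weigh Lebesgue measure by `∏ j, |w_j| ^ (2 a_j)`. Up to the
coordinate hyperplanes, `{ψ < t}` is the polydisc of radii `exp (t / (2 p_j))`, so its mass is
`C * exp (κ t)` with `C = πⁿ / ∏ j, (a_j + 1)` and `κ = ∑ j, (a_j + 1) / p_j`. Hence the image of
the weighted measure under `ψ` has density `C κ exp (κ t)` on the line, and integrating `exp (-ψ)`
over `{ψ < L}` amounts to integrating `C κ exp (q t)` over `(-∞, L)`, where `q = κ - 1`.
-/

open Metric Module Set

section NormRpow

variable {E : Type*} [NormedAddCommGroup E] [NormedSpace ℝ E] [Nontrivial E]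
  [FiniteDimensional ℝ E]

lemma pow_finrank_pred_mul_rpow {y : ℝ} (hy : 0 < y) (s : ℝ) :
    y ^ (finrank ℝ E - 1) * y ^ s = y ^ (finrank ℝ E + s - 1) := by
  rw [← Real.rpow_natCast, ← Real.rpow_add hy, Nat.cast_pred finrank_pos]
  ring_nf

variable [MeasurableSpace E] [BorelSpace E] (μ : Measure E) [μ.IsAddHaarMeasure]

lemma integrableOn_ball_norm_rpow {s : ℝ} (hs : 0 < finrank ℝ E + s) (r : ℝ) :
    IntegrableOn (fun x : E ↦ ‖x‖ ^ s) (ball 0 r) μ := by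
  rw [integrableOn_fun_norm_addHaar μ (f := fun y ↦ y ^ s)]
  obtain hr | hr := le_or_gt r 0
  · simp [Ioo_eq_empty_of_le hr]
  refine IntegrableOn.congr_fun ?_
    (fun y hy ↦ (pow_finrank_pred_mul_rpow (E := E) hy.1 s).symm) measurableSet_Ioo
  exact (intervalIntegral.integrableOn_Ioo_rpow_iff hr).2 (by linarith)

lemma setIntegral_ball_norm_rpow {s r : ℝ} (hs : 0 < finrank ℝ E + s) (hr : 0 ≤ r) :
    ∫ x in ball (0 : E) r, ‖x‖ ^ s ∂μ =
      finrank ℝ E * μ.real (ball 0 1) * (r ^ (finrank ℝ E + s) / (finrank ℝ E + s)) := by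
  have radial : ∀ y ∈ Ioi (0 : ℝ), y ^ (finrank ℝ E - 1) • (Iio r).indicator (· ^ s) y =
      (Iio r).indicator (· ^ (finrank ℝ E + s - 1)) y := fun y hy ↦ by
    by_cases hyr : y < r <;> simp [hyr, pow_finrank_pred_mul_rpow (E := E) hy s]
  calc ∫ x in ball (0 : E) r, ‖x‖ ^ s ∂μ
    _ = ∫ x, (Iio r).indicator (· ^ s) ‖x‖ ∂μ := by
      rw [← integral_indicator measurableSet_ball]
      simp [indicator]
    _ = finrank ℝ E * μ.real (ball 0 1) * ∫ y in 0..r, y ^ (finrank ℝ E + s - 1) := by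
      rw [integral_fun_norm_addHaar μ, setIntegral_congr_fun measurableSet_Ioi radial,
        setIntegral_indicator measurableSet_Iio, Ioi_inter_Iio,
        intervalIntegral.integral_of_le hr, integral_Ioc_eq_integral_Ioo, nsmul_eq_mul,
        smul_eq_mul, mul_assoc]
    _ = _ := by
      rw [integral_rpow (.inl (by linarith)), sub_add_cancel, Real.zero_rpow hs.ne', sub_zero]

end NormRpow

lemma lintegral_pi_ofReal_prod_eq_ofReal_prod_integral {ι : Type*} [Fintype ι] {X : ι → Type*}
    [∀ i, MeasurableSpace (X i)] {μ : ∀ i, Measure (X i)} [∀ i, SigmaFinite (μ i)]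
    {f : ∀ i, X i → ℝ} (hf : ∀ i, Integrable (f i) (μ i)) (hf₀ : ∀ i x, 0 ≤ f i x) :
    ∫⁻ x, ENNReal.ofReal (∏ i, f i (x i)) ∂Measure.pi μ =
      ENNReal.ofReal (∏ i, ∫ x, f i x ∂μ i) := by
  rw [← integral_fintype_prod_eq_prod, ofReal_integral_eq_lintegral_ofReal
    (.fintype_prod_dep hf) (ae_of_all _ fun x ↦ Finset.prod_nonneg fun i _ ↦ hf₀ i (x i))]

section ExponentialDistribution

lemma lintegral_exp_mul_Iio_of_pos {a : ℝ} (ha : 0 < a) (L : ℝ) :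
    ∫⁻ t in Iio L, ENNReal.ofReal (Real.exp (a * t)) =
      ENNReal.ofReal (Real.exp (a * L) / a) := by
  rw [← integral_exp_mul_Iic ha, setLIntegral_congr Iio_ae_eq_Iic,
    ofReal_integral_eq_lintegral_ofReal (integrableOn_exp_mul_Iic ha L)
      (ae_of_all _ fun t ↦ (Real.exp_pos _).le)]

lemma lintegral_exp_mul_Iio_of_nonpos {a : ℝ} (ha : a ≤ 0) (L : ℝ) :
    ∫⁻ t in Iio L, ENNReal.ofReal (Real.exp (a * t)) = ⊤ := by
  rw [eq_top_iff]
  calc ⊤ = ∫⁻ _ in Iio L, ENNReal.ofReal (Real.exp (a * L)) := by simp [Real.exp_pos]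
    _ ≤ ∫⁻ t in Iio L, ENNReal.ofReal (Real.exp (a * t)) :=
      setLIntegral_mono' measurableSet_Iio fun t (ht : t < L) ↦ ENNReal.ofReal_le_ofReal <|
        Real.exp_le_exp.2 <| mul_le_mul_of_nonpos_left ht.le ha

lemma lintegral_exp_mul_Iio_lt_top_iff {a L : ℝ} :
    ∫⁻ t in Iio L, ENNReal.ofReal (Real.exp (a * t)) < ⊤ ↔ 0 < a := by
  obtain ha | ha := lt_or_ge 0 a
  · simp [lintegral_exp_mul_Iio_of_pos ha, ha]
  · simp [lintegral_exp_mul_Iio_of_nonpos ha, ha]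

lemma measure_eq_of_forall_Iio_eq {R : Type*} [TopologicalSpace R] [SecondCountableTopology R]
    [ConditionallyCompleteLinearOrder R] [OrderTopology R] [NoMaxOrder R] [MeasurableSpace R]
    [BorelSpace R] {μ ν : Measure R} (hμ : ∀ t, μ (Iio t) ≠ ⊤)
    (h : ∀ t, μ (Iio t) = ν (Iio t)) : μ = ν := by
  have measure_Ico (ρ : Measure R) (hρ : ∀ t, ρ (Iio t) ≠ ⊤) {a b : R} (hab : a < b) :
      ρ (Ico a b) = ρ (Iio b) - ρ (Iio a) := by
    rw [← measure_sdiff (Iio_subset_Iio hab.le) nullMeasurableSet_Iio (hρ a), Iio_sdiff_Iio]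
  refine Measure.ext_of_Ico' μ ν (fun a b _ ↦ measure_ne_top_of_subset Ico_subset_Iio_self (hμ b))
    fun a b hab ↦ ?_
  rw [measure_Ico μ hμ hab, measure_Ico ν (fun t ↦ h t ▸ hμ t) hab, h, h]

variable {X : Type*} [MeasurableSpace X] {μ : Measure X} {ψ : X → ℝ} {c : ENNReal} {κ : ℝ}

lemma map_eq_withDensity_exp_of_measure_lt (hψ : Measurable ψ) (hc : c ≠ ⊤) (hκ : 0 < κ)
    (h : ∀ t, μ {x | ψ x < t} = c * ENNReal.ofReal (Real.exp (κ * t))) :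
    μ.map ψ = volume.withDensity
      fun t ↦ c * ENNReal.ofReal κ * ENNReal.ofReal (Real.exp (κ * t)) := by
  have map_Iio (t : ℝ) : μ.map ψ (Iio t) = c * ENNReal.ofReal (Real.exp (κ * t)) := by
    rw [Measure.map_apply hψ measurableSet_Iio]
    exact h t
  refine measure_eq_of_forall_Iio_eq (fun t ↦ map_Iio t ▸ by finiteness) fun t ↦ ?_
  rw [map_Iio, withDensity_apply _ measurableSet_Iio, lintegral_const_mul _ (by fun_prop),
    lintegral_exp_mul_Iio_of_pos hκ, mul_assoc, ← ENNReal.ofReal_mul hκ.le,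
    mul_div_cancel₀ _ hκ.ne']

lemma setLIntegral_exp_neg_of_measure_lt (hψ : Measurable ψ) (hc : c ≠ ⊤) (hκ : 0 < κ)
    (h : ∀ t, μ {x | ψ x < t} = c * ENNReal.ofReal (Real.exp (κ * t))) (L : ℝ) :
    ∫⁻ x in {x | ψ x < L}, ENNReal.ofReal (Real.exp (-ψ x)) ∂μ =
      c * ENNReal.ofReal κ * ∫⁻ t in Iio L, ENNReal.ofReal (Real.exp ((κ - 1) * t)) := by
  calc ∫⁻ x in {x | ψ x < L}, ENNReal.ofReal (Real.exp (-ψ x)) ∂μ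
    _ = ∫⁻ t in Iio L, ENNReal.ofReal (Real.exp (-t)) ∂μ.map ψ :=
      (setLIntegral_map (f := fun t ↦ ENNReal.ofReal (Real.exp (-t))) measurableSet_Iio
        (by fun_prop) hψ).symm
    _ = ∫⁻ t in Iio L, c * ENNReal.ofReal κ * ENNReal.ofReal (Real.exp ((κ - 1) * t)) := by
      rw [map_eq_withDensity_exp_of_measure_lt hψ hc hκ h,
        setLIntegral_withDensity_eq_setLIntegral_mul _ (by fun_prop) (by fun_prop)
          measurableSet_Iio]
      refine lintegral_congr fun t ↦ ?_
      rw [Pi.mul_apply, mul_assoc, ← ENNReal.ofReal_mul (Real.exp_pos _).le, ← Real.exp_add,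
        sub_one_mul, sub_eq_add_neg]
    _ = _ := lintegral_const_mul _ (by fun_prop)

end ExponentialDistribution

section MonomialMeasure

lemma setIntegral_complex_ball_norm_rpow_two_mul {b r : ℝ} (hb : -1 < b) (hr : 0 ≤ r) :
    ∫ z in ball (0 : ℂ) r, ‖z‖ ^ (2 * b) = Real.pi / (b + 1) * r ^ (2 * (b + 1)) := by
  rw [setIntegral_ball_norm_rpow volume (by simp; linarith) hr]
  have : b + 1 ≠ 0 := by linarith
  have : (2 : ℝ) + 2 * b = 2 * (b + 1) := by ring
  simp [measureReal_def, this]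
  field_simp

variable {ι : Type*} [Fintype ι] {a : ι → ℝ}

lemma sum_add_one_div_pos [Nonempty ι] {p : ι → ℝ} (hp : ∀ j, 0 < p j) (ha : ∀ j, -1 < a j) :
    0 < ∑ j, (a j + 1) / p j :=
  Finset.sum_pos (fun j _ ↦ div_pos (by linarith [ha j]) (hp j)) Finset.univ_nonempty

lemma prod_add_one_pos (ha : ∀ j, -1 < a j) : 0 < ∏ j, (a j + 1) :=
  Finset.prod_pos fun j _ ↦ by linarith [ha j]

/-- The measure `∏ j, |w_j| ^ (2 a_j) dλ(w)` on `ℂ^ι`, which is `|w^α|² dλ(w)` when `a` is a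
multi-index `α`. Real exponents are allowed; the value of the density on the coordinate hyperplanes
is irrelevant, since these are null sets. -/
noncomputable def monomialMeasure (a : ι → ℝ) : Measure (ι → ℂ) :=
  volume.withDensity fun w ↦ ENNReal.ofReal (∏ j, ‖w j‖ ^ (2 * a j))

lemma monomialMeasure_polydisc (ha : ∀ j, -1 < a j) {r : ι → ℝ} (hr : ∀ j, 0 ≤ r j) :
    monomialMeasure a (univ.pi fun j ↦ ball 0 (r j)) =
      ENNReal.ofReal (∏ j, (Real.pi / (a j + 1) * r j ^ (2 * (a j + 1)))) := by
  rw [monomialMeasure, withDensity_apply _ (.univ_pi fun _ ↦ measurableSet_ball), volume_pi,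
    Measure.restrict_pi_pi, lintegral_pi_ofReal_prod_eq_ofReal_prod_integral
      (f := fun j z ↦ ‖z‖ ^ (2 * a j))
      (fun j ↦ integrableOn_ball_norm_rpow _ (by simp; linarith [ha j]) _) fun j z ↦ by positivity]
  simp_rw [setIntegral_complex_ball_norm_rpow_two_mul (ha _) (hr _)]

end MonomialMeasure

section Psi

variable {n : ℕ} {p : Fin n → ℝ} {a : Fin n → ℝ}

lemma measurable_psi (p : Fin n → ℝ) : Measurable (psi p) :=
  Measurable.iSup fun _ ↦ by fun_prop

lemma psi_lt_iff [NeZero n] (hp : ∀ j, 0 < p j) {w : Fin n → ℂ} (hw : ∀ j, w j ≠ 0) {t : ℝ} :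
    psi p w < t ↔ ∀ j, ‖w j‖ < Real.exp (t / (2 * p j)) := by
  rw [psi, ← Finset.sup'_univ_eq_ciSup, Finset.sup'_lt_iff]
  refine ⟨fun h j ↦ ?_, fun h j _ ↦ ?_⟩
  all_goals
    have hpj : 0 < 2 * p j := by linarith [hp j]
    specialize h j
    simpa [← Real.log_lt_iff_lt_exp (norm_pos_iff.2 (hw j)), lt_div_iff₀' hpj] using h

lemma psi_lt_ae_eq_polydisc [NeZero n] (hp : ∀ j, 0 < p j) (t : ℝ) :
    {w : Fin n → ℂ | psi p w < t} =ᵐ[volume]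
      univ.pi fun j ↦ ball (0 : ℂ) (Real.exp (t / (2 * p j))) := by
  have coord_ne_zero : ∀ᵐ w : Fin n → ℂ, ∀ j, w j ≠ 0 :=
    ae_all_iff.2 fun j ↦ Measure.ae_eval_ne _ j 0
  refine eventuallyEq_set.2 ?_
  filter_upwards [coord_ne_zero] with w hw
  simp [psi_lt_iff hp hw]

lemma monomialMeasure_psi_lt [NeZero n] (hp : ∀ j, 0 < p j) (ha : ∀ j, -1 < a j) (t : ℝ) :
    monomialMeasure a {w | psi p w < t} =
      ENNReal.ofReal (Real.pi ^ n / ∏ j, (a j + 1)) *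
        ENNReal.ofReal (Real.exp ((∑ j, (a j + 1) / p j) * t)) := by
  have radius_rpow (j : Fin n) :
      Real.exp (t / (2 * p j)) ^ (2 * (a j + 1)) = Real.exp ((a j + 1) / p j * t) := by
    have := (hp j).ne'
    rw [← Real.exp_mul]
    congr 1
    field_simp
  have prod_pos := prod_add_one_pos ha
  have eq_polydisc : monomialMeasure a {w | psi p w < t} =
      monomialMeasure a (univ.pi fun j ↦ ball 0 (Real.exp (t / (2 * p j)))) :=
    measure_congr ((withDensity_absolutelyContinuous _ _).ae_eq (psi_lt_ae_eq_polydisc hp t))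
  rw [eq_polydisc, monomialMeasure_polydisc ha fun j ↦ (Real.exp_pos _).le,
    ← ENNReal.ofReal_mul (by positivity), Finset.sum_mul, Real.exp_sum]
  simp_rw [radius_rpow]
  simp [Finset.prod_mul_distrib, Finset.prod_div_distrib]

lemma setLIntegral_prod_norm_rpow_mul_exp_neg_psi [NeZero n] (hp : ∀ j, 0 < p j)
    (ha : ∀ j, -1 < a j) (L : ℝ) :
    ∫⁻ w in {w | psi p w < L},
        ENNReal.ofReal ((∏ j, ‖w j‖ ^ (2 * a j)) * Real.exp (-psi p w)) =
      ENNReal.ofReal (Real.pi ^ n / (∏ j, (a j + 1)) * ∑ j, (a j + 1) / p j) *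
        ∫⁻ t in Iio L, ENNReal.ofReal (Real.exp ((∑ j, (a j + 1) / p j - 1) * t)) := by
  have prod_pos := prod_add_one_pos ha
  have rate_pos := sum_add_one_div_pos hp ha
  have hψ := measurable_psi p
  rw [ENNReal.ofReal_mul (by positivity),
    ← setLIntegral_exp_neg_of_measure_lt hψ ENNReal.ofReal_ne_top rate_pos
      (monomialMeasure_psi_lt hp ha) L, monomialMeasure,
    setLIntegral_withDensity_eq_setLIntegral_mul _ (by fun_prop) (by fun_prop)
      (measurableSet_lt hψ measurable_const)]
  refine lintegral_congr fun w ↦ ?_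
  exact ENNReal.ofReal_mul (by positivity)

end Psi

lemma norm_prod_pow_sq {ι 𝕜 : Type*} [Fintype ι] [NormedField 𝕜] (α : ι → ℕ) (w : ι → 𝕜) :
    ‖∏ j, w j ^ α j‖ ^ 2 = ∏ j, ‖w j‖ ^ (2 * (α j : ℝ)) := by
  simp_rw [norm_prod, norm_pow, ← Finset.prod_pow, ← pow_mul']
  norm_cast

theorem stmt_2_general (n : ℕ) (hn : 0 < n) (p : Fin n → ℝ) (hp : ∀ j, 0 < p j)
    (a : Fin n → ℝ) (ha : ∀ j, -1 < a j) (r : ℝ) (hr : 0 < r)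
    (q : ℝ) (hq : q = ∑ j, (a j + 1) / p j - 1) :
    ((∫⁻ w in {w : Fin n → ℂ | psi p w < Real.log r},
          ENNReal.ofReal ((∏ j, ‖w j‖ ^ (2 * a j)) * Real.exp (-psi p w))) < ⊤ ↔ 0 < q) ∧
    (0 < q →
      (∫⁻ w in {w : Fin n → ℂ | psi p w < Real.log r},
          ENNReal.ofReal ((∏ j, ‖w j‖ ^ (2 * a j)) * Real.exp (-psi p w))) =
        ENNReal.ofReal (Real.pi ^ n * (q + 1) * r ^ q / (q * ∏ j, (a j + 1)))) := by
  have : NeZero n := ⟨hn.ne'⟩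
  have prod_pos := prod_add_one_pos ha
  have rate_eq : ∑ j, (a j + 1) / p j = q + 1 := by linarith
  have rate_pos : 0 < q + 1 := rate_eq ▸ sum_add_one_div_pos hp ha
  rw [setLIntegral_prod_norm_rpow_mul_exp_neg_psi hp ha, rate_eq, add_sub_cancel_right]
  refine ⟨?_, fun q_pos ↦ ?_⟩
  · have const_ne_zero : ENNReal.ofReal (Real.pi ^ n / (∏ j, (a j + 1)) * (q + 1)) ≠ 0 :=
      (ENNReal.ofReal_pos.2 (by positivity)).ne'
    rw [← lintegral_exp_mul_Iio_lt_top_iff (L := Real.log r), ENNReal.mul_lt_top_iff]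
    grind [ENNReal.ofReal_lt_top, ENNReal.zero_lt_top]
  · rw [lintegral_exp_mul_Iio_of_pos q_pos, ← ENNReal.ofReal_mul (by positivity),
      Real.rpow_def_of_pos hr, mul_comm (Real.log r)]
    congr 1
    field_simp

theorem stmt_2 (n : ℕ) (hn : 0 < n) (p : Fin n → ℝ) (hp : ∀ j, 0 < p j)
    (α : Fin n → ℕ) (r₁ : ℝ) (hr₁ : 0 < r₁)
    (q : ℝ) (hq : q = ∑ j, ((α j : ℝ) + 1) / p j - 1) :
    ((∫⁻ w in {w : Fin n → ℂ | psi p w < Real.log r₁},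
          ENNReal.ofReal (‖∏ j, (w j) ^ (α j)‖ ^ 2 * Real.exp (-psi p w))) < ⊤
        ↔ 0 < q) ∧
    (0 < q →
      (∫⁻ w in {w : Fin n → ℂ | psi p w < Real.log r₁},
          ENNReal.ofReal (‖∏ j, (w j) ^ (α j)‖ ^ 2 * Real.exp (-psi p w))) =
        ENNReal.ofReal (Real.pi ^ n * (q + 1) * r₁ ^ q /
          (q * ∏ j, ((α j : ℝ) + 1)))) := by
  simp_rw [norm_prod_pow_sq]
  exact stmt_2_general n hn p hp (fun j ↦ α j) (fun j ↦ neg_one_lt_zero.trans_le (by positivity))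
    r₁ hr₁ q hq
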